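/- The 4-arity SWAP gate G = |0000⟩ + |0101⟩ + |1010⟩ + |1111⟩ (i.e. G = Σ_{x,y∈{0,1}} |x,y,x,y⟩) is not Pfaffian under any change of basis: there do not exist invertible 2×2 complex matrices A, B, C, D, a scalar α ∈ ℂ, and a skew-symmetric matrix Ξ ∈ ℂ^{4×4} such that (A⊗B⊗C⊗D)G = α·sPf(Ξ). -/

import Mathlib

/-!
In the new basis the SWAP gate factors as `H(a,b,c,d) = P(a,c) · Q(b,d)`, where `P = A Cᵀ` and
`Q = B Dᵀ` are invertible. A multiple of a sub-Pfaffian vector vanishes at bitstrings of odd weight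
and satisfies the quadratic matchgate identity. Vanishing at odd weight says that every diagonal
entry of either of `P`, `Q` times every off-diagonal entry of the other is zero, and the matchgate
identity then reads `2X = 2Y`, where `X` is the product of the four diagonal entries of `P` and `Q`
and `Y` that of the four off-diagonal ones. As `X * Y = 0`, both vanish, so
`det P * det Q = X + Y = 0`, a contradiction.
-/

open scoped BigOperators

noncomputable section

/-- Change of basis on an `n`-arity gate: `((A₁⊗…⊗Aₙ)G)(b) = Σ_c (∏ᵢ Aᵢ(bᵢ,cᵢ))·G(c)`. -/
def cobGate {n : ℕ} (A : Fin n → Matrix (Fin 2) (Fin 2) ℂ) (G : (Fin n → Fin 2) → ℂ) :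
    (Fin n → Fin 2) → ℂ :=
  fun b => ∑ c : Fin n → Fin 2, (∏ i, A i (b i) (c i)) * G c

/-- Change of basis on an `n`-arity cogate: `C′(b) = Σ_c C(c)·∏ᵢ Aᵢ⁻¹(cᵢ,bᵢ)`. -/
def cobCogate {n : ℕ} (A : Fin n → Matrix (Fin 2) (Fin 2) ℂ) (C : (Fin n → Fin 2) → ℂ) :
    (Fin n → Fin 2) → ℂ :=
  fun b => ∑ c : Fin n → Fin 2, C c * ∏ i, (A i)⁻¹ (c i) (b i)

/-- The standard basis vector (ket/bra) at the bitstring `v`. -/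
def ket {n : ℕ} (v : Fin n → Fin 2) : (Fin n → Fin 2) → ℂ :=
  fun b => if b = v then 1 else 0

/-- The support of a bitstring. -/
def supp {n : ℕ} (b : Fin n → Fin 2) : Finset (Fin n) :=
  Finset.univ.filter fun i => b i = 1

/-- Fuel-driven Laplace expansion of the Pfaffian of a principal submatrix. -/
def subPfAux {n : ℕ} (Ξ : Matrix (Fin n) (Fin n) ℂ) : ℕ → Finset (Fin n) → ℂ
  | 0, I => if I = ∅ then 1 else 0
  | fuel + 1, I =>
    if hI : I.Nonempty then
      if Odd I.card then 0
      else
        ∑ i ∈ I.erase (I.min' hI),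
          (-1 : ℂ) ^ (I.filter fun j => j ≤ i).card * Ξ (I.min' hI) i *
            subPfAux Ξ fuel ((I.erase (I.min' hI)).erase i)
    else 1

/-- `subPf Ξ I` is the Pfaffian `Pf(Ξ|_I)` of the principal submatrix of `Ξ` on the
rows and columns in `I` (`1` on the empty set, `0` for odd `|I|`). -/
def subPf {n : ℕ} (Ξ : Matrix (Fin n) (Fin n) ℂ) (I : Finset (Fin n)) : ℂ :=
  subPfAux Ξ I.card I

/-- The sub-Pfaffian vector: coordinate `Pf(Ξ|_I)` at the bitstring with support `I`. -/
def sPf {n : ℕ} (Ξ : Matrix (Fin n) (Fin n) ℂ) : (Fin n → Fin 2) → ℂ :=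
  fun b => subPf Ξ (supp b)

/-- The dual sub-Pfaffian vector: coordinate `Pf(Θ|_{Jᶜ})` at the bitstring with support `J`. -/
def sPfStar {n : ℕ} (Θ : Matrix (Fin n) (Fin n) ℂ) : (Fin n → Fin 2) → ℂ :=
  fun b => subPf Θ (supp b)ᶜ

/-- A matrix is skew-symmetric. -/
def IsSkew {n : ℕ} (Ξ : Matrix (Fin n) (Fin n) ℂ) : Prop :=
  ∀ i j, Ξ j i = -Ξ i j

/-- A gate is Pfaffian under the change of basis `M`. -/
def IsPfaffGate {n : ℕ} (M : Fin n → Matrix (Fin 2) (Fin 2) ℂ) (G : (Fin n → Fin 2) → ℂ) : Prop :=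
  ∃ (α : ℂ) (Ξ : Matrix (Fin n) (Fin n) ℂ), IsSkew Ξ ∧ cobGate M G = fun b => α * sPf Ξ b

/-- A cogate is Pfaffian under the change of basis `M`. -/
def IsPfaffCogate {n : ℕ} (M : Fin n → Matrix (Fin 2) (Fin 2) ℂ) (C : (Fin n → Fin 2) → ℂ) : Prop :=
  ∃ (β : ℂ) (Θ : Matrix (Fin n) (Fin n) ℂ), IsSkew Θ ∧ cobCogate M C = fun b => β * sPfStar Θ b

/-- The 4-arity SWAP gate `Σ_{x,y} |x,y,x,y⟩`. -/
def swapGate : (Fin 4 → Fin 2) → ℂ :=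
  ket ![0, 0, 0, 0] + ket ![0, 1, 0, 1] + ket ![1, 0, 1, 0] + ket ![1, 1, 1, 1]

open scoped Matrix

section ChangeOfBasis

variable {n : ℕ} (M : Fin n → Matrix (Fin 2) (Fin 2) ℂ)

lemma cobGate_add (G H : (Fin n → Fin 2) → ℂ) :
    cobGate M (G + H) = cobGate M G + cobGate M H := by
  funext b
  simp only [cobGate, Pi.add_apply, mul_add, Finset.sum_add_distrib]

lemma cobGate_ket (v : Fin n → Fin 2) : cobGate M (ket v) = fun b => ∏ i, M i (b i) (v i) := by
  funext b
  simp only [cobGate, ket, mul_ite, mul_one, mul_zero, Finset.sum_ite_eq', Finset.mem_univ, if_true]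

end ChangeOfBasis

lemma cobGate_swapGate (M : Fin 4 → Matrix (Fin 2) (Fin 2) ℂ) :
    cobGate M swapGate =
      fun b => (M 0 * (M 2)ᵀ) (b 0) (b 2) * (M 1 * (M 3)ᵀ) (b 1) (b 3) := by
  funext b
  simp only [swapGate, cobGate_add, cobGate_ket, Pi.add_apply, Fin.prod_univ_four,
    Matrix.mul_apply, Fin.sum_univ_two, Matrix.transpose_apply, Matrix.cons_val]
  ring

section SubPfaffian

variable {n : ℕ} (Ξ : Matrix (Fin n) (Fin n) ℂ)

lemma subPfAux_empty (k : ℕ) : subPfAux Ξ k ∅ = 1 := by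
  cases k <;> simp [subPfAux]

lemma subPfAux_succ_of_card_le {k : ℕ} {I : Finset (Fin n)} (hI : I.card ≤ k) :
    subPfAux Ξ (k + 1) I = subPfAux Ξ k I := by
  induction k generalizing I with
  | zero => rw [Finset.card_eq_zero.mp (Nat.le_zero.mp hI), subPfAux_empty, subPfAux_empty]
  | succ k ih =>
    rw [subPfAux, subPfAux]
    split_ifs with hne hodd
    · rfl
    · refine Finset.sum_congr rfl fun i hi => ?_
      have hmin := Finset.card_erase_of_mem (I.min'_mem hne)
      have hcard := Finset.card_erase_of_mem hi
      rw [ih (by lia)]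
    · rfl

lemma subPfAux_eq_subPf {k : ℕ} {I : Finset (Fin n)} (hI : I.card ≤ k) :
    subPfAux Ξ k I = subPf Ξ I := by
  induction k, hI using Nat.le_induction with
  | base => rfl
  | succ k hk ih => rw [subPfAux_succ_of_card_le Ξ hk, ih]

lemma subPf_empty : subPf Ξ ∅ = 1 :=
  subPfAux_empty Ξ _

lemma subPf_of_odd_card {I : Finset (Fin n)} (hI : Odd I.card) : subPf Ξ I = 0 := by
  have hne : I.Nonempty := Finset.card_pos.mp hI.pos
  rw [← subPfAux_eq_subPf Ξ I.card.le_succ, subPfAux, dif_pos hne, if_pos hI]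

lemma subPf_insert_of_forall_lt {m : Fin n} {J : Finset (Fin n)} (hm : ∀ j ∈ J, m < j)
    (hJ : Odd J.card) :
    subPf Ξ (insert m J) =
      ∑ i ∈ J, (-1) ^ (J.filter (· < i)).card * Ξ m i * subPf Ξ (J.erase i) := by
  have hmJ : m ∉ J := fun h => (hm m h).false
  have hmin : (insert m J).min' (Finset.insert_nonempty m J) = m :=
    le_antisymm (Finset.min'_le _ _ (Finset.mem_insert_self m J))
      (Finset.le_min' _ _ _ (by simpa using fun j hj => (hm j hj).le))
  have heven : ¬Odd (insert m J).card := by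
    rw [Finset.card_insert_of_notMem hmJ, Nat.not_odd_iff_even]
    exact hJ.add_one
  rw [subPf, Finset.card_insert_of_notMem hmJ, subPfAux, dif_pos (Finset.insert_nonempty m J),
    if_neg heven, hmin, Finset.erase_insert hmJ]
  refine Finset.sum_congr rfl fun i hi => ?_
  have hfilter : (insert m J).filter (· ≤ i) = insert m (insert i (J.filter (· < i))) := by
    have := hm i hi
    grind
  have hcard : ((insert m J).filter (· ≤ i)).card = (J.filter (· < i)).card + 2 := by
    rw [hfilter, Finset.card_insert_of_notMem (by simp [hmJ, (hm i hi).ne]),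
      Finset.card_insert_of_notMem (by simp)]
  rw [hcard, pow_add, neg_one_sq, mul_one, subPfAux_eq_subPf Ξ (Finset.card_erase_le)]

lemma subPf_pair {i j : Fin n} (h : i < j) : subPf Ξ {i, j} = Ξ i j := by
  rw [subPf_insert_of_forall_lt Ξ (by simpa using h) (by simp)]
  simp [subPf_empty, Finset.filter_singleton]

lemma subPf_quadruple {i j k l : Fin n} (hij : i < j) (hjk : j < k) (hkl : k < l) :
    subPf Ξ {i, j, k, l} = Ξ i j * Ξ k l - Ξ i k * Ξ j l + Ξ i l * Ξ j k := by
  have hjl : j < l := hjk.trans hkl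
  have hlt : ∀ x ∈ ({j, k, l} : Finset (Fin n)), i < x := by
    simp [hij, hij.trans hjk, hij.trans hjl]
  have hcard : ({j, k, l} : Finset (Fin n)).card = 3 :=
    Finset.card_eq_three.mpr ⟨j, k, l, hjk.ne, hjl.ne, hkl.ne, rfl⟩
  have hej : ({j, k, l} : Finset (Fin n)).erase j = {k, l} := by grind
  have hek : ({j, k, l} : Finset (Fin n)).erase k = {j, l} := by grind
  have hel : ({j, k, l} : Finset (Fin n)).erase l = {j, k} := by grind
  have hfj : ({j, k, l} : Finset (Fin n)).filter (· < j) = ∅ := by grind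
  have hfk : ({j, k, l} : Finset (Fin n)).filter (· < k) = {j} := by grind
  have hfl : ({j, k, l} : Finset (Fin n)).filter (· < l) = {j, k} := by grind
  rw [subPf_insert_of_forall_lt Ξ hlt (hcard ▸ by decide),
    Finset.sum_insert (by simp [hjk.ne, hjl.ne]), Finset.sum_pair hkl.ne, hej, hek, hel,
    hfj, hfk, hfl, subPf_pair Ξ hkl, subPf_pair Ξ hjl, subPf_pair Ξ hjk, Finset.card_empty,
    Finset.card_singleton, Finset.card_pair hjk.ne]
  ring

end SubPfaffian

section Matchgate

variable {R : Type*} [CommRing R]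

/-- A `4`-arity gate is a *matchgate* if it vanishes at bitstrings of odd weight and satisfies the
quadratic matchgate identity. This is the obstruction to being Pfaffian: for a scalar multiple of a
sub-Pfaffian vector the identity is the expansion of the `4 × 4` Pfaffian, homogenized by the
coordinate at `0000`. -/
structure IsMatchgate (G : (Fin 4 → Fin 2) → R) : Prop where
  eq_zero_of_odd : ∀ b, Odd (supp b).card → G b = 0
  quadratic : G ![0, 0, 0, 0] * G ![1, 1, 1, 1] =
    G ![1, 1, 0, 0] * G ![0, 0, 1, 1] - G ![1, 0, 1, 0] * G ![0, 1, 0, 1]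
      + G ![1, 0, 0, 1] * G ![0, 1, 1, 0]

namespace IsMatchgate

lemma const_mul {G : (Fin 4 → Fin 2) → R} (hG : IsMatchgate G) (r : R) :
    IsMatchgate fun b => r * G b where
  eq_zero_of_odd b hb := by rw [hG.eq_zero_of_odd b hb, mul_zero]
  quadratic := by linear_combination r ^ 2 * hG.quadratic

lemma det_mul_det_eq_zero [NoZeroDivisors R] [NeZero (2 : R)] {P Q : Matrix (Fin 2) (Fin 2) R}
    (h : IsMatchgate fun b => P (b 0) (b 2) * Q (b 1) (b 3)) : P.det * Q.det = 0 := by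
  have hP₀₀Q₀₁ : P 0 0 * Q 0 1 = 0 := h.eq_zero_of_odd ![0, 0, 0, 1] (by decide)
  have hP₀₁Q₀₀ : P 0 1 * Q 0 0 = 0 := h.eq_zero_of_odd ![0, 0, 1, 0] (by decide)
  have hquad : P 0 0 * Q 0 0 * (P 1 1 * Q 1 1) = P 1 0 * Q 1 0 * (P 0 1 * Q 0 1)
      - P 1 1 * Q 0 0 * (P 0 0 * Q 1 1) + P 1 0 * Q 0 1 * (P 0 1 * Q 1 0) := h.quadratic
  set X := P 0 0 * P 1 1 * Q 0 0 * Q 1 1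
  set Y := P 0 1 * P 1 0 * Q 0 1 * Q 1 0
  have hXY : X = Y := by
    have : (2 : R) * (X - Y) = 0 := by linear_combination hquad
    exact sub_eq_zero.mp ((mul_eq_zero.mp this).resolve_left two_ne_zero)
  have hX_mul_Y : X * Y = 0 := by
    linear_combination P 1 1 * Q 0 0 * Q 1 1 * P 0 1 * P 1 0 * Q 1 0 * hP₀₀Q₀₁
  have hY : Y = 0 := mul_self_eq_zero.mp (hXY ▸ hX_mul_Y)
  calc P.det * Q.det
      = X + Y - P 0 0 * Q 0 1 * (P 1 1 * Q 1 0) - P 0 1 * Q 0 0 * (P 1 0 * Q 1 1) := by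
        rw [Matrix.det_fin_two, Matrix.det_fin_two]; ring
    _ = 0 := by rw [hP₀₀Q₀₁, hP₀₁Q₀₀, hXY, hY]; ring

end IsMatchgate

lemma isMatchgate_sPf (Ξ : Matrix (Fin 4) (Fin 4) ℂ) : IsMatchgate (sPf Ξ) where
  eq_zero_of_odd _ hb := subPf_of_odd_card Ξ hb
  quadratic := by
    simp only [sPf]
    rw [show supp ![0, 0, 0, 0] = (∅ : Finset (Fin 4)) by decide,
      show supp ![1, 1, 1, 1] = ({0, 1, 2, 3} : Finset (Fin 4)) by decide,
      show supp ![1, 1, 0, 0] = ({0, 1} : Finset (Fin 4)) by decide,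
      show supp ![0, 0, 1, 1] = ({2, 3} : Finset (Fin 4)) by decide,
      show supp ![1, 0, 1, 0] = ({0, 2} : Finset (Fin 4)) by decide,
      show supp ![0, 1, 0, 1] = ({1, 3} : Finset (Fin 4)) by decide,
      show supp ![1, 0, 0, 1] = ({0, 3} : Finset (Fin 4)) by decide,
      show supp ![0, 1, 1, 0] = ({1, 2} : Finset (Fin 4)) by decide,
      subPf_empty, one_mul, subPf_quadruple Ξ (by decide) (by decide) (by decide)]
    simp only [subPf_pair, Fin.reduceLT]

end Matchgate

/-- Theorem 5.1.1: SWAP is not Pfaffian under any change of basis. -/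
theorem stmt12 :
    ¬ ∃ (A B C D : Matrix (Fin 2) (Fin 2) ℂ) (α : ℂ) (Ξ : Matrix (Fin 4) (Fin 4) ℂ),
      IsUnit A.det ∧ IsUnit B.det ∧ IsUnit C.det ∧ IsUnit D.det ∧ IsSkew Ξ ∧
      cobGate ![A, B, C, D] swapGate = fun b => α * sPf Ξ b := by
  rintro ⟨A, B, C, D, α, Ξ, hA, hB, hC, hD, -, h⟩
  have hprod : IsMatchgate fun b => (A * Cᵀ) (b 0) (b 2) * (B * Dᵀ) (b 1) (b 3) := by
    have hmul := (isMatchgate_sPf Ξ).const_mul α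
    rwa [← h, cobGate_swapGate] at hmul
  have hdet : (A * Cᵀ).det * (B * Dᵀ).det = 0 := hprod.det_mul_det_eq_zero
  simp only [Matrix.det_mul, Matrix.det_transpose] at hdet
  exact ((hA.mul hC).mul (hB.mul hD)).ne_zero hdet
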